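/- Let (A,S,Z,Φ) be a structured C*-algebra. For all a,b,c ∈ S, if a < c and b < c then a + b ∈ S and a + b < c. -/

import Mathlib

variable {A : Type*} [CStarAlgebra A] [PartialOrder A] [StarOrderedRing A]

/-- A structured C*-algebra `(A, S, Z, Φ)`. -/
structure StructuredCStar (A : Type*) [CStarAlgebra A] [PartialOrder A]
    [StarOrderedRing A] where
  /-- The expectation. -/
  Φ : A →ₗ[ℂ] A
  /-- The distinguished closed *-subsemigroup. -/
  S : Set A
  /-- The distinguished central C*-subalgebra. -/
  Z : Set A
  Φ_idem : ∀ a : A, Φ (Φ a) = Φ a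
  Φ_contractive : ∀ a : A, ‖Φ a‖ ≤ ‖a‖
  Φ_pos : ∀ a : A, 0 ≤ a → 0 ≤ Φ a
  Φ_mul_left : ∀ a b : A, Φ (Φ a * b) = Φ a * Φ b
  Φ_mul_right : ∀ a b : A, Φ (a * Φ b) = Φ a * Φ b
  S_isClosed : IsClosed S
  S_mul : ∀ a ∈ S, ∀ b ∈ S, a * b ∈ S
  S_star : ∀ a ∈ S, star a ∈ S
  S_smul : ∀ (c : ℂ), ∀ a ∈ S, c • a ∈ S
  Z_sub_S : Z ⊆ S
  Z_isClosed : IsClosed Z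
  Z_add : ∀ a ∈ Z, ∀ b ∈ Z, a + b ∈ Z
  Z_mul : ∀ a ∈ Z, ∀ b ∈ Z, a * b ∈ Z
  Z_star : ∀ a ∈ Z, star a ∈ Z
  Z_smul : ∀ (c : ℂ), ∀ a ∈ Z, c • a ∈ Z
  Z_fixed : ∀ z ∈ Z, Φ z = z
  Z_central : ∀ z ∈ Z, ∀ a : A, z * Φ a = Φ a * z
  PhiS_add : ∀ x ∈ Φ '' S, ∀ y ∈ Φ '' S, x + y ∈ Φ '' S
  PhiS_ideal_right : ∀ x ∈ Φ '' S, ∀ a : A, x * Φ a ∈ Φ '' S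
  PhiS_ideal_left : ∀ x ∈ Φ '' S, ∀ a : A, Φ a * x ∈ Φ '' S
  S_sq_sub_PhiS : ∀ s ∈ S, star s * s ∈ Φ '' S
  PhiS_sub_S : ∀ s ∈ S, Φ s ∈ S

namespace StructuredCStar

variable (𝒜 : StructuredCStar A)

/-- `a <_s b` : domination witnessed by `s`. -/
def domBy (a s b : A) : Prop :=
  a = a * s * b ∧ a = b * s * a ∧
  a * s ∈ 𝒜.Φ '' 𝒜.S ∧ s * a ∈ 𝒜.Φ '' 𝒜.S ∧
  b * s ∈ 𝒜.Z ∧ s * b ∈ 𝒜.Z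

/-- `a < b` : domination. -/
def dom (a b : A) : Prop := ∃ s ∈ 𝒜.S, 𝒜.domBy a s b

/-- `N ⊆ S` is binormal. -/
def Binormal (N : Set A) : Prop :=
  ∀ a ∈ 𝒜.S, ∀ b ∈ 𝒜.S, a * b ∈ N → ∀ z ∈ N, a * z * b ∈ N

/-- `B ⊆ S` is bistable. -/
def Bistable (B : Set A) : Prop :=
  ∀ a ∈ 𝒜.S, ∀ b ∈ 𝒜.S, a * b ∈ B → 𝒜.Φ a * b ∈ B ∧ a * 𝒜.Φ b ∈ B

/-- `P ⊆ S` is productive. -/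
def Productive (P : Set A) : Prop :=
  ∀ a ∈ 𝒜.S, 𝒜.Φ a ∈ closure ((a * ·) '' P) ∧ 𝒜.Φ a ∈ closure ((· * a) '' P)

end StructuredCStar

namespace StructuredCStar

theorem mem_S_of_mem_image (𝒜 : StructuredCStar A) {x : A} (hx : x ∈ 𝒜.Φ '' 𝒜.S) :
    x ∈ 𝒜.S := by
  obtain ⟨s, hs, rfl⟩ := hx
  exact 𝒜.PhiS_sub_S s hs

theorem image_mul_Z (𝒜 : StructuredCStar A) {x z : A} (hx : x ∈ 𝒜.Φ '' 𝒜.S)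
    (hz : z ∈ 𝒜.Z) : x * z ∈ 𝒜.Φ '' 𝒜.S := by
  simpa only [𝒜.Z_fixed z hz] using 𝒜.PhiS_ideal_right x hx z

theorem Z_mul_image (𝒜 : StructuredCStar A) {x z : A} (hx : x ∈ 𝒜.Φ '' 𝒜.S)
    (hz : z ∈ 𝒜.Z) : z * x ∈ 𝒜.Φ '' 𝒜.S := by
  simpa only [𝒜.Z_fixed z hz] using 𝒜.PhiS_ideal_left x hx z

theorem Z_comm (𝒜 : StructuredCStar A) {y z : A} (hy : y ∈ 𝒜.Z) (hz : z ∈ 𝒜.Z) :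
    y * z = z * y := by
  simpa only [𝒜.Z_fixed z hz] using 𝒜.Z_central y hy z

theorem Z_neg (𝒜 : StructuredCStar A) {z : A} (hz : z ∈ 𝒜.Z) : -z ∈ 𝒜.Z := by
  simpa using 𝒜.Z_smul (-1) z hz

theorem Z_sub (𝒜 : StructuredCStar A) {y z : A} (hy : y ∈ 𝒜.Z) (hz : z ∈ 𝒜.Z) :
    y - z ∈ 𝒜.Z := by
  simpa only [sub_eq_add_neg] using 𝒜.Z_add y hy _ (𝒜.Z_neg hz)

theorem mul_star_mem_image (𝒜 : StructuredCStar A) {s : A} (hs : s ∈ 𝒜.S) :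
    s * star s ∈ 𝒜.Φ '' 𝒜.S := by
  simpa using 𝒜.S_sq_sub_PhiS _ (𝒜.S_star s hs)

/-- An element `s` of `S` intertwines the adjoints of `s * c` and `c * s` when both lie in `Z`. -/
theorem star_mul_intertwine (𝒜 : StructuredCStar A) {s c : A} (hs : s ∈ 𝒜.S)
    (hsc : s * c ∈ 𝒜.Z) (hcs : c * s ∈ 𝒜.Z) :
    star (s * c) * s = s * star (c * s) := by
  obtain ⟨r, -, hr⟩ := 𝒜.mul_star_mem_image hs
  have hcomm := 𝒜.Z_central _ (𝒜.Z_star _ hsc) r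
  rw [hr] at hcomm
  have hnorm := 𝒜.Z_comm hcs (𝒜.Z_star _ hcs)
  have hnorm' := 𝒜.Z_comm hsc (𝒜.Z_star _ hsc)
  set p := s * c with hp
  set q := c * s with hq
  have hpq : s * q = p * s := by rw [hp, hq, mul_assoc]
  have hpq' : star q * star s = star s * star p := by
    rw [← star_mul, hpq, star_mul]
  clear_value p q
  set d := star p * s - s * star q with hd
  clear_value d
  have hds : d * star s = 0 := by
    rw [hd, sub_mul, mul_assoc, mul_assoc, hpq', hcomm, mul_assoc, sub_self]
  have hdq : d * q = p * d := by
    rw [hd, sub_mul, mul_sub, mul_assoc, hpq, mul_assoc, ← hnorm, ← mul_assoc s, hpq,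
      ← mul_assoc, ← hnorm', mul_assoc, mul_assoc]
  have hdd : d * star d = 0 := by
    have hstar : star d = star s * p - q * star s := by
      rw [hd]; simp only [star_sub, star_mul, star_star]
    rw [hstar, mul_sub, ← mul_assoc, ← mul_assoc, hdq, mul_assoc p, hds]
    simp
  exact sub_eq_zero.mp (hd.symm.trans ((CStarRing.mul_star_self_eq_zero_iff d).mp hdd))

theorem mul_star_eq_self_of_mul_eq_self {B : Type*} [CStarAlgebra B] {a p : B}
    (hp : p * star p = star p * p) (h : a * p = a) : a * star p = a := by
  have hpp : a * star p * p = a * star p := by rw [mul_assoc, ← hp, ← mul_assoc, h]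
  have hdd : (a * star p - a) * star (a * star p - a) = 0 := by
    simp only [star_sub, star_mul, star_star, sub_mul, mul_sub]
    rw [← mul_assoc, ← mul_assoc, hpp, h, sub_self]
  exact sub_eq_zero.mp (CStarRing.mul_star_self_eq_zero_iff _ |>.mp hdd)

theorem star_mul_eq_self_of_mul_eq_self {B : Type*} [CStarAlgebra B] {a p : B}
    (hp : p * star p = star p * p) (h : p * a = a) : star p * a = a := by
  have h' : star a * star p = star a := by rw [← star_mul, h]
  have := mul_star_eq_self_of_mul_eq_self (p := star p) (by simpa using hp.symm) h'
  simpa using congrArg star this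

end StructuredCStar

/-- dominated sums: if `a, b < c` then `a + b ∈ S` and `a + b < c`. -/
theorem StructuredCStar.dom_add (𝒜 : StructuredCStar A) {a b c : A}
    (ha : a ∈ 𝒜.S) (hb : b ∈ 𝒜.S) (hc : c ∈ 𝒜.S)
    (hac : 𝒜.dom a c) (hbc : 𝒜.dom b c) :
    a + b ∈ 𝒜.S ∧ 𝒜.dom (a + b) c := by
  obtain ⟨s, hs, has, hsa, hasΦ, hsaΦ, hcs, hsc⟩ := hac
  obtain ⟨t, ht, hbt, htb, hbtΦ, htbΦ, hct, htc⟩ := hbc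
  have hsZ := 𝒜.Z_mul _ (𝒜.Z_star _ hsc) _ hsc
  have htZ := 𝒜.Z_mul _ (𝒜.Z_star _ htc) _ htc
  have hR_mem := 𝒜.Z_mul _ hcs _ (𝒜.Z_star _ hcs)
  have hT_mem := 𝒜.Z_mul _ hct _ (𝒜.Z_star _ hct)
  have hsI := 𝒜.star_mul_intertwine hs hsc hcs
  have htI := 𝒜.star_mul_intertwine ht htc hct
  have ap : a * (star (s * c) * (s * c)) = a := by
    have h : a * (s * c) = a := by rw [← mul_assoc, ← has]
    rw [← mul_assoc, mul_star_eq_self_of_mul_eq_self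
      (𝒜.Z_comm hsc (𝒜.Z_star _ hsc)) h, h]
  have bq : b * (star (t * c) * (t * c)) = b := by
    have h : b * (t * c) = b := by rw [← mul_assoc, ← hbt]
    rw [← mul_assoc, mul_star_eq_self_of_mul_eq_self
      (𝒜.Z_comm htc (𝒜.Z_star _ htc)) h, h]
  have pa : c * s * star (c * s) * a = a := by
    rw [mul_assoc, star_mul_eq_self_of_mul_eq_self
      (𝒜.Z_comm hcs (𝒜.Z_star _ hcs)) hsa.symm, ← hsa]
  have qb : c * t * star (c * t) * b = b := by
    rw [mul_assoc, star_mul_eq_self_of_mul_eq_self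
      (𝒜.Z_comm hct (𝒜.Z_star _ hct)) htb.symm, ← htb]
  set P := star (s * c) * (s * c) with hP
  set Q := star (t * c) * (t * c) with hQ
  set R := c * s * star (c * s) with hR
  set T := c * t * star (c * t) with hT
  set σ := star (s * c) * s with hσ
  set τ := star (t * c) * t with hτ
  have σ_mul_c : σ * c = P := by rw [hσ, hP, mul_assoc]
  have τ_mul_c : τ * c = Q := by rw [hτ, hQ, mul_assoc]
  have c_mul_σ : c * σ = R := by rw [hsI, hR, mul_assoc]
  have c_mul_τ : c * τ = T := by rw [htI, hT, mul_assoc]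
  clear_value σ τ P Q R T
  have σ_eq : σ = s * star s * star c := by rw [hsI, star_mul, mul_assoc]
  have τ_eq : τ = t * star t * star c := by rw [htI, star_mul, mul_assoc]
  have huc : (σ + τ - P * τ) * c = P + Q - P * Q := by
    rw [sub_mul, add_mul, mul_assoc, σ_mul_c, τ_mul_c]
  have hcu : c * (σ + τ - P * τ) = R + T - R * T := by
    rw [mul_sub, mul_add, c_mul_σ, c_mul_τ, ← σ_mul_c, mul_assoc, c_mul_τ, ← mul_assoc, c_mul_σ]
  have hucZ : (σ + τ - P * τ) * c ∈ 𝒜.Z := by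
    rw [huc]; exact 𝒜.Z_sub (𝒜.Z_add _ hsZ _ htZ) (𝒜.Z_mul _ hsZ _ htZ)
  have hcuZ : c * (σ + τ - P * τ) ∈ 𝒜.Z := by
    rw [hcu]; exact 𝒜.Z_sub (𝒜.Z_add _ hR_mem _ hT_mem) (𝒜.Z_mul _ hR_mem _ hT_mem)
  have huS : σ + τ - P * τ ∈ 𝒜.S := by
    have heq : σ + τ - P * τ =
        (s * star s + t * star t + -P * (t * star t)) * star c := by
      rw [σ_eq, τ_eq]; noncomm_ring
    rw [heq]
    have hss := 𝒜.mul_star_mem_image hs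
    have htt := 𝒜.mul_star_mem_image ht
    exact 𝒜.S_mul _ (𝒜.mem_S_of_mem_image (𝒜.PhiS_add _ (𝒜.PhiS_add _ hss _ htt) _
      (𝒜.Z_mul_image htt (𝒜.Z_neg hsZ)))) _ (𝒜.S_star c hc)
  set u := σ + τ - P * τ
  refine ⟨?_, u, huS, ?_, ?_, ?_, ?_, hcuZ, hucZ⟩
  · have heq : a + b = (a * s + b * t) * c := by rw [add_mul, ← has, ← hbt]
    rw [heq]
    exact 𝒜.S_mul _ (𝒜.mem_S_of_mem_image (𝒜.PhiS_add _ hasΦ _ hbtΦ)) _ hc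
  · have hau : a * (P + Q - P * Q) = a := by
      rw [mul_sub, mul_add, ← mul_assoc, ap, add_sub_cancel_right]
    have hbu : b * (P + Q - P * Q) = b := by
      rw [𝒜.Z_comm hsZ htZ, mul_sub, mul_add, ← mul_assoc, bq, add_sub_cancel_left]
    rw [mul_assoc, huc, add_mul, hau, hbu]
  · have hau : (R + T - R * T) * a = a := by
      rw [𝒜.Z_comm hR_mem hT_mem, sub_mul, add_mul, mul_assoc, pa, add_sub_cancel_right]
    have hbu : (R + T - R * T) * b = b := by
      rw [sub_mul, add_mul, mul_assoc, qb, add_sub_cancel_left]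
    rw [hcu, mul_add, hau, hbu]
  · have heq : (a + b) * u = a * s * (c * u) + b * t * (c * u) := by
      rw [← mul_assoc, ← mul_assoc, ← has, ← hbt, add_mul]
    rw [heq]
    exact 𝒜.PhiS_add _ (𝒜.image_mul_Z hasΦ hcuZ) _ (𝒜.image_mul_Z hbtΦ hcuZ)
  · have heq : u * (a + b) = u * c * (s * a) + u * c * (t * b) := by
      rw [mul_assoc, mul_assoc, ← mul_assoc c, ← mul_assoc c, ← hsa, ← htb, mul_add]
    rw [heq]
    exact 𝒜.PhiS_add _ (𝒜.Z_mul_image hsaΦ hucZ) _ (𝒜.Z_mul_image htbΦ hucZ)
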